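/- Suppose the initial strategy p^0 = q_r(s^0) of the CULO model is strictly positive (which holds automatically for finite s^0) and the CULO iterates converge to p̄* ∈ P*. Then supp(p̄*) = K*, where K* = ∪_{p* ∈ P*} supp(p*) is the set of all routes used by at least one UE strategy. -/

import Mathlib

/-!
Strict monotonicity makes the link flow of a user equilibrium unique, so `bΛ (p* - p̄) = 0` for user
equilibria `p*` and `p̄`. Every increment of the valuation lies in the range of `Λᵀ` and is thus
orthogonal to `q ∘ (p* - p̄)`. Up to a term that is the same for all strategies, `D(p, q_r(s))` is
`∑ₖ qₖ pₖ log pₖ + r ∑ₖ qₖ pₖ sₖ`, so `D(p*, pᵗ) - D(p̄, pᵗ)` does not depend on `t`. If `pᵗ → p̄`,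
then `D(p̄, pᵗ) → 0`, hence `D(p*, pᵗ)` stays bounded, whereas a route with `p*ₖ > 0 = p̄ₖ` would
drive it to `∞`.
-/

open Matrix Filter Finset Topology

noncomputable section

variable {A W K : Type*}

/-- OD-route incidence matrix `Σ`: each column is the standard unit vector at `od k`
(every route `k` serves exactly one OD pair, `od k`). -/
def Sig [DecidableEq W] (od : K → W) : Matrix W K ℝ :=
  Matrix.of fun w k => if od k = w then 1 else 0

/-- The strategy set `P = {p : p ≥ 0, Σ p = 1}`. -/
def Pset [Fintype K] [DecidableEq W] (od : K → W) : Set (K → ℝ) :=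
  {p | (∀ k, 0 ≤ p k) ∧ ∀ w : W, (Sig od).mulVec p w = 1}

/-- `q = Σᵀ d`. -/
def qvec [Fintype W] [DecidableEq W] (od : K → W) (d : W → ℝ) : K → ℝ :=
  (Sig od)ᵀ.mulVec d

/-- `bΛ = Λ · diag q`. -/
def bLam [Fintype K] [Fintype W] [DecidableEq W] [DecidableEq K]
    (Λ : Matrix A K ℝ) (od : K → W) (d : W → ℝ) : Matrix A K ℝ :=
  Λ * Matrix.diagonal (qvec od d)

/-- The link-flow set `X = {bΛ p : p ∈ P}`. -/
def Xset [Fintype K] [Fintype W] [DecidableEq W] [DecidableEq K]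
    (Λ : Matrix A K ℝ) (od : K → W) (d : W → ℝ) : Set (A → ℝ) :=
  (fun p => (bLam Λ od d).mulVec p) '' Pset od

/-- The route-cost map `c(p) = Λᵀ u(bΛ p)`. -/
def routeCost [Fintype A] [Fintype K] [Fintype W] [DecidableEq W] [DecidableEq K]
    (Λ : Matrix A K ℝ) (od : K → W) (d : W → ℝ)
    (u : (A → ℝ) → (A → ℝ)) : (K → ℝ) → (K → ℝ) :=
  fun p => Λᵀ.mulVec (u ((bLam Λ od d).mulVec p))

/-- The UE set `P*`: solutions of the variational inequality. -/
def UEset [Fintype A] [Fintype K] [Fintype W] [DecidableEq W] [DecidableEq K]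
    (Λ : Matrix A K ℝ) (od : K → W) (d : W → ℝ)
    (u : (A → ℝ) → (A → ℝ)) : Set (K → ℝ) :=
  {p | p ∈ Pset od ∧ ∀ p' ∈ Pset od, 0 ≤ routeCost Λ od d u p ⬝ᵥ (p' - p)}

/-- The logit map `q_r`. -/
def logit [Fintype K] [DecidableEq W] (od : K → W) (r : ℝ) (s : K → ℝ) : K → ℝ :=
  fun k => Real.exp (-r * s k) /
    ∑ k' ∈ Finset.univ.filter (fun k' => od k' = od k), Real.exp (-r * s k')

/-- The negative entropy `φ(p) = ∑ₖ qₖ pₖ log pₖ` (with `0·log 0 = 0`). -/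
def negEnt [Fintype K] [Fintype W] [DecidableEq W] (od : K → W) (d : W → ℝ)
    (p : K → ℝ) : ℝ :=
  ∑ k, qvec od d k * (p k * Real.log (p k))

/-- The KL divergence `D(p, p') = ∑ₖ qₖ pₖ (log pₖ − log p'ₖ)` (with `0·log 0 = 0`). -/
def KLdiv [Fintype K] [Fintype W] [DecidableEq W] (od : K → W) (d : W → ℝ)
    (p p' : K → ℝ) : ℝ :=
  ∑ k, qvec od d k * (p k * (Real.log (p k) - Real.log (p' k)))

section Strategies

variable [Fintype K] [DecidableEq W] {od : K → W}

theorem Sig_mulVec_apply (od : K → W) (p : K → ℝ) (w : W) :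
    (Sig od *ᵥ p) w = ∑ k with od k = w, p k := by
  simp only [Sig, mulVec, dotProduct, of_apply, ite_mul, one_mul, zero_mul, sum_filter]

theorem sum_fiber_eq_one_of_mem_Pset {p : K → ℝ} (hp : p ∈ Pset od) (w : W) :
    ∑ k with od k = w, p k = 1 := by
  rw [← Sig_mulVec_apply, hp.2]

theorem ite_od_eq_mem_Pset {p p' : K → ℝ} (hp : p ∈ Pset od) (hp' : p' ∈ Pset od) (w : W) :
    (fun k => if od k = w then p' k else p k) ∈ Pset od := by
  refine ⟨fun k => ?_, fun v => ?_⟩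
  · dsimp only
    split_ifs
    exacts [hp'.1 k, hp.1 k]
  · have od_eq {k : K} (hk : k ∈ univ.filter (od · = v)) : od k = v := (mem_filter.1 hk).2
    rw [Sig_mulVec_apply]
    obtain rfl | hvw := eq_or_ne v w
    · rw [← sum_fiber_eq_one_of_mem_Pset hp' v]
      exact sum_congr rfl fun k hk => if_pos (od_eq hk)
    · rw [← sum_fiber_eq_one_of_mem_Pset hp v]
      exact sum_congr rfl fun k hk => if_neg (od_eq hk ▸ hvw)

theorem sum_fiber_mul_sub_nonneg {c p p' : K → ℝ} (hp : p ∈ Pset od)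
    (hvi : ∀ p' ∈ Pset od, 0 ≤ c ⬝ᵥ (p' - p)) (hp' : p' ∈ Pset od) (w : W) :
    0 ≤ ∑ k with od k = w, c k * (p' k - p k) := by
  refine (hvi _ (ite_od_eq_mem_Pset hp hp' w)).trans_eq ?_
  rw [dotProduct, sum_filter]
  refine sum_congr rfl fun k _ => ?_
  by_cases hk : od k = w <;> simp [hk]

/-- A variational inequality over `P` decouples over OD pairs, so it survives reweighting them. -/
theorem sum_od_mul_mul_sub_nonneg {c p p' : K → ℝ} (hp : p ∈ Pset od)
    (hvi : ∀ p' ∈ Pset od, 0 ≤ c ⬝ᵥ (p' - p)) (hp' : p' ∈ Pset od)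
    {f : W → ℝ} (hf : ∀ w, 0 ≤ f w) :
    0 ≤ ∑ k, f (od k) * (c k * (p' k - p k)) := by
  rw [← sum_fiberwise_of_maps_to (t := univ.image od) fun k => mem_image_of_mem od]
  refine sum_nonneg fun w _ => ?_
  calc 0 ≤ f w * ∑ k with od k = w, c k * (p' k - p k) :=
        mul_nonneg (hf w) (sum_fiber_mul_sub_nonneg hp hvi hp' w)
    _ = ∑ k with od k = w, f (od k) * (c k * (p' k - p k)) := by
        rw [mul_sum]
        exact sum_congr rfl fun k hk => by rw [(mem_filter.1 hk).2]

theorem sum_od_mul_of_mem_Pset [Fintype W] {p : K → ℝ} (hp : p ∈ Pset od) (f : W → ℝ) :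
    ∑ k, f (od k) * p k = ∑ w, f w := by
  rw [← sum_fiberwise univ od]
  refine sum_congr rfl fun w _ => ?_
  calc ∑ k with od k = w, f (od k) * p k
      = ∑ k with od k = w, f w * p k :=
        sum_congr rfl fun k hk => by rw [(mem_filter.1 hk).2]
    _ = f w := by rw [← mul_sum, sum_fiber_eq_one_of_mem_Pset hp, mul_one]

end Strategies

theorem qvec_apply [Fintype W] [DecidableEq W] (od : K → W) (d : W → ℝ) (k : K) :
    qvec od d k = d (od k) := by
  simp [qvec, Sig, mulVec, dotProduct]

section Equilibrium

variable [Fintype A] [Fintype W] [Fintype K] [DecidableEq W] [DecidableEq K]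
  {Λ : Matrix A K ℝ} {od : K → W} {d : W → ℝ} {u : (A → ℝ) → (A → ℝ)}

theorem qvec_mul_dotProduct_transpose_mulVec (Λ : Matrix A K ℝ) (od : K → W) (d : W → ℝ)
    (x : K → ℝ) (v : A → ℝ) :
    (qvec od d * x) ⬝ᵥ (Λᵀ *ᵥ v) = v ⬝ᵥ (bLam Λ od d *ᵥ x) := by
  have hdiag : diagonal (qvec od d) *ᵥ x = qvec od d * x :=
    funext fun k => mulVec_diagonal _ _ k
  rw [dotProduct_transpose_mulVec, bLam, ← mulVec_mulVec, hdiag]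

theorem dotProduct_bLam_mulVec_sub_nonneg (hd : ∀ w, 0 ≤ d w) {p p' : K → ℝ}
    (hp : p ∈ UEset Λ od d u) (hp' : p' ∈ Pset od) :
    0 ≤ u (bLam Λ od d *ᵥ p) ⬝ᵥ (bLam Λ od d *ᵥ (p' - p)) := by
  refine (sum_od_mul_mul_sub_nonneg hp.1 hp.2 hp' hd).trans_eq ?_
  rw [← qvec_mul_dotProduct_transpose_mulVec, dotProduct]
  refine sum_congr rfl fun k _ => ?_
  simp only [routeCost, Pi.mul_apply, Pi.sub_apply, qvec_apply]
  ring

theorem bLam_mulVec_eq_of_mem_UEset (hd : ∀ w, 0 ≤ d w)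
    (hmono : ∀ x ∈ Xset Λ od d, ∀ x' ∈ Xset Λ od d, x ≠ x' → 0 < (u x - u x') ⬝ᵥ (x - x'))
    {p p' : K → ℝ} (hp : p ∈ UEset Λ od d u) (hp' : p' ∈ UEset Λ od d u) :
    bLam Λ od d *ᵥ p = bLam Λ od d *ᵥ p' := by
  by_contra hne
  have hlt := hmono _ ⟨p, hp.1, rfl⟩ _ ⟨p', hp'.1, rfl⟩ hne
  have hvi := dotProduct_bLam_mulVec_sub_nonneg hd hp hp'.1
  have hvi' := dotProduct_bLam_mulVec_sub_nonneg hd hp' hp.1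
  rw [mulVec_sub] at hvi hvi'
  simp only [sub_dotProduct, dotProduct_sub] at hlt hvi hvi'
  linarith

theorem qvec_mul_dotProduct_valuation_eq {x : K → ℝ} (hx : bLam Λ od d *ᵥ x = 0)
    {η : ℕ → ℝ} {s p : ℕ → K → ℝ}
    (hs : ∀ t, s (t + 1) = s t + η (t + 1) • routeCost Λ od d u (p t)) (t : ℕ) :
    (qvec od d * x) ⬝ᵥ s t = (qvec od d * x) ⬝ᵥ s 0 := by
  induction t with
  | zero => rfl
  | succ t ih =>
    rw [hs, dotProduct_add, dotProduct_smul, routeCost, qvec_mul_dotProduct_transpose_mulVec, hx,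
      dotProduct_zero, smul_zero, add_zero, ih]

end Equilibrium

section Logit

variable [Fintype K] [DecidableEq W]

/-- The normalizing constant of the logit map `q_r(s)` on the OD pair `w`; it is `0` if no route
serves `w`. -/
def logitPartition (od : K → W) (r : ℝ) (s : K → ℝ) (w : W) : ℝ :=
  ∑ k with od k = w, Real.exp (-r * s k)

variable (od : K → W) (r : ℝ) (s : K → ℝ) (k : K)

theorem exp_le_logitPartition : Real.exp (-r * s k) ≤ logitPartition od r s (od k) :=
  single_le_sum (f := fun j => Real.exp (-r * s j)) (fun _ _ => (Real.exp_pos _).le)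
    (mem_filter.2 ⟨mem_univ k, rfl⟩)

theorem logitPartition_pos : 0 < logitPartition od r s (od k) :=
  (Real.exp_pos _).trans_le (exp_le_logitPartition od r s k)

theorem logit_pos : 0 < logit od r s k :=
  div_pos (Real.exp_pos _) (logitPartition_pos od r s k)

theorem logit_le_one : logit od r s k ≤ 1 :=
  (div_le_one (logitPartition_pos od r s k)).2 (exp_le_logitPartition od r s k)

theorem log_logit :
    Real.log (logit od r s k) = -r * s k - Real.log (logitPartition od r s (od k)) := by
  rw [← Real.log_exp (-r * s k),
    ← Real.log_div (Real.exp_pos _).ne' (logitPartition_pos od r s k).ne']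
  rfl

end Logit

section Divergence

variable [Fintype W] [Fintype K] [DecidableEq W] {od : K → W} {d : W → ℝ}

theorem KLdiv_logit {p : K → ℝ} (hp : p ∈ Pset od) (d : W → ℝ) (r : ℝ) (s : K → ℝ) :
    KLdiv od d p (logit od r s) =
      negEnt od d p + r * ((qvec od d * p) ⬝ᵥ s) +
        ∑ w, d w * Real.log (logitPartition od r s w) := by
  rw [← sum_od_mul_of_mem_Pset hp, KLdiv, negEnt, dotProduct, mul_sum, ← sum_add_distrib,
    ← sum_add_distrib]
  refine sum_congr rfl fun k _ => ?_
  rw [log_logit, Pi.mul_apply, qvec_apply]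
  ring

theorem KLdiv_logit_sub_KLdiv_logit {p p' : K → ℝ} (hp : p ∈ Pset od) (hp' : p' ∈ Pset od)
    (d : W → ℝ) (r : ℝ) (s : K → ℝ) :
    KLdiv od d p (logit od r s) - KLdiv od d p' (logit od r s) =
      negEnt od d p - negEnt od d p' + r * ((qvec od d * (p - p')) ⬝ᵥ s) := by
  rw [KLdiv_logit hp, KLdiv_logit hp', mul_sub, sub_dotProduct]
  ring

theorem negEnt_sub_le_KLdiv (hd : ∀ w, 0 ≤ d w) {p p' : K → ℝ} (hp : ∀ k, 0 ≤ p k)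
    (hp'_nonneg : ∀ k, 0 ≤ p' k) (hp'_le_one : ∀ k, p' k ≤ 1) (k : K) :
    negEnt od d p - d (od k) * p k * Real.log (p' k) ≤ KLdiv od d p p' := by
  have hterm (j : K) : 0 ≤ -(d (od j) * p j * Real.log (p' j)) :=
    neg_nonneg.2 <| mul_nonpos_of_nonneg_of_nonpos (mul_nonneg (hd _) (hp j))
      (Real.log_nonpos (hp'_nonneg j) (hp'_le_one j))
  calc negEnt od d p - d (od k) * p k * Real.log (p' k)
      ≤ negEnt od d p + ∑ j, -(d (od j) * p j * Real.log (p' j)) := by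
        rw [sub_eq_add_neg]
        gcongr
        exact single_le_sum (f := fun j => -(d (od j) * p j * Real.log (p' j)))
          (fun j _ => hterm j) (mem_univ k)
    _ = KLdiv od d p p' := by
        rw [negEnt, KLdiv, ← sum_add_distrib]
        refine sum_congr rfl fun j _ => ?_
        rw [qvec_apply]
        ring

variable {ι : Type*} {l : Filter ι} {p : ι → K → ℝ}

theorem tendsto_KLdiv_nhds_zero (od : K → W) (d : W → ℝ) {pbar : K → ℝ}
    (hp : Tendsto p l (𝓝 pbar)) : Tendsto (fun t => KLdiv od d pbar (p t)) l (𝓝 0) := by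
  rw [← sum_const_zero (ι := K) (s := univ)]
  refine tendsto_finsetSum _ fun k _ => ?_
  by_cases hk : pbar k = 0
  · simp [hk, tendsto_const_nhds]
  · have hlog := (tendsto_pi_nhds.1 hp k).log hk
    simpa using ((hlog.const_sub (Real.log (pbar k))).const_mul (pbar k)).const_mul (qvec od d k)

theorem tendsto_KLdiv_atTop (hd : ∀ w, 0 < d w) {pstar : K → ℝ} (hpstar : ∀ k, 0 ≤ pstar k)
    (hp_pos : ∀ t k, 0 < p t k) (hp_le_one : ∀ t k, p t k ≤ 1) {k : K} (hk : 0 < pstar k)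
    (hp : Tendsto (fun t => p t k) l (𝓝 0)) :
    Tendsto (fun t => KLdiv od d pstar (p t)) l atTop := by
  have hlog : Tendsto (fun t => Real.log (p t k)) l atBot :=
    Real.tendsto_log_nhdsGT_zero.comp <|
      tendsto_nhdsWithin_iff.2 ⟨hp, Eventually.of_forall fun t => hp_pos t k⟩
  have hneg : Tendsto (fun t => -(d (od k) * pstar k * Real.log (p t k))) l atTop :=
    tendsto_neg_atBot_atTop.comp (hlog.const_mul_atBot (mul_pos (hd _) hk))
  refine tendsto_atTop_mono (fun t => ?_) (tendsto_atTop_add_const_left l (negEnt od d pstar) hneg)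
  rw [← sub_eq_add_neg]
  exact negEnt_sub_le_KLdiv (fun w => (hd w).le) hpstar (fun j => (hp_pos t j).le) (hp_le_one t) k

theorem pos_of_tendsto_logit [l.NeBot] (hd : ∀ w, 0 < d w) {r : ℝ} {s : ι → K → ℝ}
    {pstar pbar : K → ℝ} (hpstar : pstar ∈ Pset od) (hpbar : pbar ∈ Pset od) {a : ℝ}
    (hs : ∀ t, (qvec od d * (pstar - pbar)) ⬝ᵥ s t = a)
    (hlim : Tendsto (fun t => logit od r (s t)) l (𝓝 pbar)) {k : K} (hk : 0 < pstar k) :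
    0 < pbar k := by
  refine (hpbar.1 k).lt_of_ne fun hzero => ?_
  have hbounded : Tendsto (fun t => KLdiv od d pstar (logit od r (s t))) l
      (𝓝 (0 + (negEnt od d pstar - negEnt od d pbar + r * a))) := by
    refine ((tendsto_KLdiv_nhds_zero od d hlim).add_const _).congr fun t => ?_
    rw [← hs t, ← KLdiv_logit_sub_KLdiv_logit hpstar hpbar]
    ring
  have hunbounded : Tendsto (fun t => KLdiv od d pstar (logit od r (s t))) l atTop :=
    tendsto_KLdiv_atTop hd hpstar.1 (fun t => logit_pos od r (s t))
      (fun t => logit_le_one od r (s t)) hk (hzero ▸ tendsto_pi_nhds.1 hlim k)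
  exact not_tendsto_nhds_of_tendsto_atTop hunbounded _ hbounded

end Divergence

theorem statement10_general
    [Fintype A] [Fintype W] [Fintype K] [DecidableEq W] [DecidableEq K]
    {Λ : Matrix A K ℝ} {od : K → W} {d : W → ℝ} (hd : ∀ w, 0 < d w)
    {u : (A → ℝ) → (A → ℝ)}
    (hmono : ∀ x ∈ Xset Λ od d, ∀ x' ∈ Xset Λ od d, x ≠ x' → 0 < (u x - u x') ⬝ᵥ (x - x'))
    {r : ℝ} {η : ℕ → ℝ} {s p : ℕ → K → ℝ}
    (hsdyn : ∀ t, s (t + 1) = s t + η (t + 1) • routeCost Λ od d u (p t))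
    (hpdyn : ∀ t, p t = logit od r (s t))
    {pbar : K → ℝ} (hUE : pbar ∈ UEset Λ od d u)
    {l : Filter ℕ} [l.NeBot] (hconv : Tendsto p l (𝓝 pbar)) :
    {k | 0 < pbar k} = {k | ∃ pstar ∈ UEset Λ od d u, 0 < pstar k} := by
  ext k
  refine ⟨fun hk => ⟨pbar, hUE, hk⟩, ?_⟩
  rintro ⟨pstar, hpstar, hk⟩
  have hflow : bLam Λ od d *ᵥ (pstar - pbar) = 0 := by
    rw [mulVec_sub, sub_eq_zero]
    exact bLam_mulVec_eq_of_mem_UEset (fun w => (hd w).le) hmono hpstar hUE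
  exact pos_of_tendsto_logit hd hpstar.1 hUE.1 (qvec_mul_dotProduct_valuation_eq hflow hsdyn)
    (hconv.congr hpdyn) hk

/-- Corollary 3: if the initial strategy `p⁰ = q_r(s⁰)` of the CULO
model is strictly positive (automatic for finite `s⁰`) and the iterates converge to
`p̄* ∈ P*`, then `supp p̄* = K* = ⋃_{p* ∈ P*} supp p*`, the set of all routes used by
at least one UE strategy. -/
theorem statement10
    [Fintype A] [Fintype W] [Fintype K] [DecidableEq W] [DecidableEq K]
    (Λ : Matrix A K ℝ) (od : K → W) (d : W → ℝ)
    (hΛ : ∀ a k, Λ a k = 0 ∨ Λ a k = 1)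
    (hd : ∀ w, 0 < d w)
    (u : (A → ℝ) → (A → ℝ))
    (hu : ContDiffOn ℝ 1 u (Xset Λ od d))
    (hnonneg : ∀ x ∈ Xset Λ od d, ∀ a, 0 ≤ u x a)
    (hmono : ∀ x ∈ Xset Λ od d, ∀ x' ∈ Xset Λ od d, x ≠ x' →
      0 < (u x - u x') ⬝ᵥ (x - x'))
    (r : ℝ) (hr : 0 < r)
    (η : ℕ → ℝ) (hη : ∀ t, 0 < η t)
    (s : ℕ → K → ℝ) (p : ℕ → K → ℝ)
    (hsdyn : ∀ t, s (t + 1) = s t + η (t + 1) • routeCost Λ od d u (p t))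
    (hpdyn : ∀ t, p t = logit od r (s t))
    (hp0pos : ∀ k, 0 < p 0 k)
    (pbar : K → ℝ) (hUE : pbar ∈ UEset Λ od d u)
    (hconv : Tendsto p atTop (nhds pbar)) :
    {k | 0 < pbar k} = {k | ∃ pstar ∈ UEset Λ od d u, 0 < pstar k} :=
  statement10_general hd hmono hsdyn hpdyn hUE hconv
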